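/- Let K ∈ ℝ^{n×n} be symmetric invertible, let F₀ be an abelian Lie subalgebra of o(K) and W ⊆ ℝ^n a linear subspace such that Xα = 0 for all X ∈ F₀ and α ∈ W. Set L₀ = {E(X,α) : X ∈ F₀, α ∈ W} ⊆ e(K). Then L₀ is a maximal abelian subalgebra of e(K) if and only if both of the following hold: (a) every Y ∈ o(K) satisfying YX = XY for all X ∈ F₀ and Yα = 0 for all α ∈ W belongs to F₀; and (b) W = {α ∈ ℝ^n : Xα = 0 for all X ∈ F₀}. -/

import Mathlib

/-!
Since `E(X, a) E(Y, b) = E(XY, Xb)`, the elements `E(X, a)` and `E(Y, b)` commute exactly when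
`XY = YX` and `Xb = Ya` (`Emat_commute_iff`). Because the subalgebra splits, i.e. contains `E(X, 0)`
and `E(0, a)` separately, `E(Y, b)` centralizes it iff `Y` commutes with `F₀`, `Y` kills `W`, and
`F₀` kills `b` (`Emat_centralizes_iff`). Its membership in the subalgebra means `Y ∈ F₀` and
`b ∈ W`, so maximality decouples into (a), the case `b = 0`, and (b), the case `Y = 0`.
-/

open Matrix

/-- `o(K)`: real matrices `X` with `XK + KXᵀ = 0`. -/
def oK {n : ℕ} (K : Matrix (Fin n) (Fin n) ℝ) : Set (Matrix (Fin n) (Fin n) ℝ) :=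
  {X | X * K + K * Xᵀ = 0}

/-- The `(n+1) × (n+1)` matrix `E(X, a)` with block form `[[X, a], [0, 0]]`. -/
def Emat {n : ℕ} (X : Matrix (Fin n) (Fin n) ℝ) (a : Fin n → ℝ) :
    Matrix (Fin (n + 1)) (Fin (n + 1)) ℝ :=
  Matrix.of fun i j =>
    if hi : i.val < n then
      if hj : j.val < n then X ⟨i.val, hi⟩ ⟨j.val, hj⟩ else a ⟨i.val, hi⟩
    else 0

/-- The Lie algebra `e(K)`, as a set of `(n+1) × (n+1)` matrices. -/
def eK {n : ℕ} (K : Matrix (Fin n) (Fin n) ℝ) :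
    Set (Matrix (Fin (n + 1)) (Fin (n + 1)) ℝ) :=
  {m | ∃ X ∈ oK K, ∃ a : Fin n → ℝ, m = Emat X a}

/-- `M` is a maximal abelian subalgebra of the matrix Lie algebra (set) `L`:
it is a linear subspace contained in `L`, its elements pairwise commute, and
every element of `L` commuting with all of `M` belongs to `M`. -/
def IsMASA {κ : Type*} [Fintype κ] (L M : Set (Matrix κ κ ℝ)) : Prop :=
  M ⊆ L ∧
  (∀ X ∈ M, ∀ Y ∈ M, X * Y = Y * X) ∧
  (0 : Matrix κ κ ℝ) ∈ M ∧
  (∀ X ∈ M, ∀ Y ∈ M, X + Y ∈ M) ∧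
  (∀ (c : ℝ), ∀ X ∈ M, c • X ∈ M) ∧
  (∀ Y ∈ L, (∀ X ∈ M, Y * X = X * Y) → Y ∈ M)

section Emat

variable {n : ℕ}

lemma Emat_castSucc_castSucc (X : Matrix (Fin n) (Fin n) ℝ) (a : Fin n → ℝ) (i j : Fin n) :
    Emat X a i.castSucc j.castSucc = X i j := by
  simp [Emat]

lemma Emat_castSucc_last (X : Matrix (Fin n) (Fin n) ℝ) (a : Fin n → ℝ) (i : Fin n) :
    Emat X a i.castSucc (Fin.last n) = a i := by
  simp [Emat]

lemma Emat_last (X : Matrix (Fin n) (Fin n) ℝ) (a : Fin n → ℝ) (j : Fin (n + 1)) :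
    Emat X a (Fin.last n) j = 0 := by
  simp [Emat]

lemma Emat_inj {X Y : Matrix (Fin n) (Fin n) ℝ} {a b : Fin n → ℝ} :
    Emat X a = Emat Y b ↔ X = Y ∧ a = b := by
  refine ⟨fun h => ⟨?_, ?_⟩, fun h => by rw [h.1, h.2]⟩
  · ext i j
    rw [← Emat_castSucc_castSucc X a, h, Emat_castSucc_castSucc]
  · ext i
    rw [← Emat_castSucc_last X a, h, Emat_castSucc_last]

lemma Emat_mul (X Y : Matrix (Fin n) (Fin n) ℝ) (a b : Fin n → ℝ) :
    Emat X a * Emat Y b = Emat (X * Y) (X.mulVec b) := by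
  ext i j
  rw [Matrix.mul_apply, Fin.sum_univ_castSucc, Emat_last, mul_zero, add_zero]
  induction i using Fin.lastCases with
  | last => simp [Emat_last]
  | cast i =>
    induction j using Fin.lastCases with
    | last => simp [Emat_castSucc_castSucc, Emat_castSucc_last, Matrix.mulVec, dotProduct]
    | cast j => simp [Emat_castSucc_castSucc, Matrix.mul_apply]

lemma Emat_add (X Y : Matrix (Fin n) (Fin n) ℝ) (a b : Fin n → ℝ) :
    Emat X a + Emat Y b = Emat (X + Y) (a + b) := by
  ext i j
  simp only [Emat, Matrix.add_apply, Matrix.of_apply]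
  split_ifs <;> simp

lemma Emat_smul (c : ℝ) (X : Matrix (Fin n) (Fin n) ℝ) (a : Fin n → ℝ) :
    c • Emat X a = Emat (c • X) (c • a) := by
  ext i j
  simp only [Emat, Matrix.smul_apply, Matrix.of_apply]
  split_ifs <;> simp

lemma Emat_zero : Emat (0 : Matrix (Fin n) (Fin n) ℝ) 0 = 0 := by
  ext i j
  simp [Emat]

lemma Emat_commute_iff {X Y : Matrix (Fin n) (Fin n) ℝ} {a b : Fin n → ℝ} :
    Emat X a * Emat Y b = Emat Y b * Emat X a ↔
      X * Y = Y * X ∧ X.mulVec b = Y.mulVec a := by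
  rw [Emat_mul, Emat_mul, Emat_inj]

lemma Emat_centralizes_iff {F : Set (Matrix (Fin n) (Fin n) ℝ)}
    {W : Submodule ℝ (Fin n → ℝ)} (hF : (0 : Matrix (Fin n) (Fin n) ℝ) ∈ F)
    {Y : Matrix (Fin n) (Fin n) ℝ} {b : Fin n → ℝ} :
    (∀ m ∈ {m | ∃ X ∈ F, ∃ a ∈ W, m = Emat X a}, Emat Y b * m = m * Emat Y b) ↔
      (∀ X ∈ F, Y * X = X * Y) ∧ (∀ a ∈ W, Y.mulVec a = 0) ∧ ∀ X ∈ F, X.mulVec b = 0 := by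
  constructor
  · intro h
    have h' : ∀ X ∈ F, ∀ a ∈ W, Y * X = X * Y ∧ Y.mulVec a = X.mulVec b :=
      fun X hX a ha => Emat_commute_iff.1 (h _ ⟨X, hX, a, ha, rfl⟩)
    refine ⟨fun X hX => (h' X hX 0 W.zero_mem).1, fun a ha => ?_, fun X hX => ?_⟩
    · simpa using (h' 0 hF a ha).2
    · simpa using (h' X hX 0 W.zero_mem).2.symm
  · rintro ⟨h₁, h₂, h₃⟩ _ ⟨X, hX, a, ha, rfl⟩
    exact Emat_commute_iff.2 ⟨h₁ X hX, (h₂ a ha).trans (h₃ X hX).symm⟩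

lemma Emat_mem_iff {F : Set (Matrix (Fin n) (Fin n) ℝ)} {W : Submodule ℝ (Fin n → ℝ)}
    {Y : Matrix (Fin n) (Fin n) ℝ} {b : Fin n → ℝ} :
    Emat Y b ∈ {m | ∃ X ∈ F, ∃ a ∈ W, m = Emat X a} ↔ Y ∈ F ∧ b ∈ W := by
  constructor
  · rintro ⟨X, hX, a, ha, h⟩
    obtain ⟨rfl, rfl⟩ := Emat_inj.1 h
    exact ⟨hX, ha⟩
  · rintro ⟨hY, hb⟩
    exact ⟨Y, hY, b, hb, rfl⟩

end Emat

/-- A splitting abelian subalgebra `L₀ = {E(X,a) : X ∈ F₀, a ∈ W}` of `e(K)` is a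
MASA of `e(K)` iff (a) the centralizer condition on `F₀` holds and
(b) `W` is exactly the common kernel of `F₀`. -/
theorem stmt8 {n : ℕ} (K : Matrix (Fin n) (Fin n) ℝ)
    (hKsym : Kᵀ = K) (hKinv : IsUnit K)
    (F₀ : Set (Matrix (Fin n) (Fin n) ℝ)) (W : Submodule ℝ (Fin n → ℝ))
    (hF₀sub : F₀ ⊆ oK K)
    (hF₀ab : ∀ X ∈ F₀, ∀ Y ∈ F₀, X * Y = Y * X)
    (hF₀0 : (0 : Matrix (Fin n) (Fin n) ℝ) ∈ F₀)
    (hF₀add : ∀ X ∈ F₀, ∀ Y ∈ F₀, X + Y ∈ F₀)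
    (hF₀smul : ∀ (c : ℝ), ∀ X ∈ F₀, c • X ∈ F₀)
    (hann : ∀ X ∈ F₀, ∀ a ∈ W, X.mulVec a = 0) :
    IsMASA (eK K) {m | ∃ X ∈ F₀, ∃ a ∈ W, m = Emat X a} ↔
      ((∀ Y ∈ oK K, (∀ X ∈ F₀, Y * X = X * Y) →
          (∀ a ∈ W, Y.mulVec a = 0) → Y ∈ F₀) ∧
        (W : Set (Fin n → ℝ)) = {a | ∀ X ∈ F₀, X.mulVec a = 0}) := by
  constructor
  · rintro ⟨-, -, -, -, -, hmax⟩
    have key : ∀ Y ∈ oK K, ∀ b, (∀ X ∈ F₀, Y * X = X * Y) → (∀ a ∈ W, Y.mulVec a = 0) →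
        (∀ X ∈ F₀, X.mulVec b = 0) → Y ∈ F₀ ∧ b ∈ W := fun Y hY b h₁ h₂ h₃ =>
      Emat_mem_iff.1 (hmax _ ⟨Y, hY, b, rfl⟩ ((Emat_centralizes_iff hF₀0).2 ⟨h₁, h₂, h₃⟩))
    refine ⟨fun Y hY h₁ h₂ => (key Y hY 0 h₁ h₂ (by simp)).1, ?_⟩
    exact Set.Subset.antisymm (fun a ha X hX => hann X hX a ha)
      fun b hb => (key 0 (hF₀sub hF₀0) b (by simp) (by simp) hb).2
  · rintro ⟨hA, hB⟩
    refine ⟨?_, ?_, ?_, ?_, ?_, ?_⟩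
    · rintro _ ⟨X, hX, a, -, rfl⟩
      exact ⟨X, hF₀sub hX, a, rfl⟩
    · rintro _ ⟨X, hX, a, ha, rfl⟩ _ ⟨Y, hY, b, hb, rfl⟩
      exact Emat_commute_iff.2 ⟨hF₀ab X hX Y hY, (hann X hX b hb).trans (hann Y hY a ha).symm⟩
    · exact ⟨0, hF₀0, 0, W.zero_mem, Emat_zero.symm⟩
    · rintro _ ⟨X, hX, a, ha, rfl⟩ _ ⟨Y, hY, b, hb, rfl⟩
      exact ⟨_, hF₀add X hX Y hY, _, W.add_mem ha hb, Emat_add X Y a b⟩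
    · rintro c _ ⟨X, hX, a, ha, rfl⟩
      exact ⟨_, hF₀smul c X hX, _, W.smul_mem c ha, Emat_smul c X a⟩
    · rintro _ ⟨Y, hY, b, rfl⟩ hc
      obtain ⟨h₁, h₂, h₃⟩ := (Emat_centralizes_iff hF₀0).1 hc
      have hb : b ∈ (W : Set (Fin n → ℝ)) := hB ▸ h₃
      exact Emat_mem_iff.2 ⟨hA Y hY h₁ h₂, hb⟩
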